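/- arXiv:0804.1653 — 10 statements merged into one kernel-verified Lean document; each statement's English description precedes it below -/
import Mathlib

section
/- Let q ≥ 0, let 𝒳 be a convex subset of a real vector space, and let f : 𝒳 → ℝ be q-convex. Then for every n ∈ ℕ, every x_1, …, x_n ∈ 𝒳, and every weight vector (π_1, …, π_n) in the simplex Δ^{n-1}, one has f(Σ_{i=1}^n π_i x_i) ≤ Σ_{i=1}^n π_i^q f(x_i). -/
/-- A function `f` on a convex set `X` is `q`-convex if
`f (λ x + (1-λ) y) ≤ λ^q f x + (1-λ)^q f y` for all `x, y ∈ X` and `λ ∈ [0,1]`. -/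
def QConvexOn {V : Type*} [AddCommGroup V] [Module ℝ V]
    (q : ℝ) (X : Set V) (f : V → ℝ) : Prop :=
  ∀ ⦃x⦄, x ∈ X → ∀ ⦃y⦄, y ∈ X → ∀ ⦃l : ℝ⦄, l ∈ Set.Icc (0 : ℝ) 1 →
    f (l • x + (1 - l) • y) ≤ l ^ q * f x + (1 - l) ^ q * f y

/-- Jensen's `q`-inequality: if `f` is `q`-convex on a convex set `X`, then for any
points `x₁, …, xₙ ∈ X` and weights `π` in the simplex,
`f (∑ πᵢ xᵢ) ≤ ∑ πᵢ^q f xᵢ`. -/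
theorem jensen_q_inequality {V : Type*} [AddCommGroup V] [Module ℝ V]
    {X : Set V} (hX : Convex ℝ X) {q : ℝ} (hq : 0 ≤ q) {f : V → ℝ}
    (hf : QConvexOn q X f) (n : ℕ) (x : Fin n → V) (hx : ∀ i, x i ∈ X)
    (π : Fin n → ℝ) (hπ0 : ∀ i, 0 ≤ π i) (hπ1 : ∑ i, π i = 1) :
    f (∑ i, π i • x i) ≤ ∑ i, π i ^ q * f (x i) := by
  have hz : ∀ y ∈ X, 0 ≤ (0 : ℝ) ^ q * f y := by
    intro y hy
    have h := hf hy hy (l := 0) ⟨le_refl _, zero_le_one⟩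
    simp only [zero_smul, sub_zero, one_smul, zero_add, Real.one_rpow, one_mul] at h
    linarith
  induction n with
  | zero => simp at hπ1
  | succ n ih =>
    rw [Fin.sum_univ_succ] at hπ1
    rw [Fin.sum_univ_succ, Fin.sum_univ_succ]
    have hs0 : 0 ≤ ∑ i : Fin n, π i.succ := Finset.sum_nonneg fun i _ => hπ0 _
    obtain ⟨s, hs⟩ : ∃ s, s = ∑ i : Fin n, π i.succ := ⟨_, rfl⟩
    rw [← hs] at hπ1 hs0
    rcases hs0.eq_or_lt with h0 | hpos
    · have hall : ∀ i : Fin n, π i.succ = 0 := by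
        intro i
        exact (Finset.sum_eq_zero_iff_of_nonneg (fun i _ => hπ0 _)).1
          (hs.symm.trans h0.symm) i (Finset.mem_univ i)
      have h1 : π 0 = 1 := by linarith
      simp only [hall, h1, zero_smul, Finset.sum_const_zero, one_smul, add_zero,
        Real.one_rpow, one_mul]
      have : 0 ≤ ∑ i : Fin n, (0 : ℝ) ^ q * f (x i.succ) :=
        Finset.sum_nonneg fun i _ => hz _ (hx _)
      linarith
    · have hw0 : ∀ i : Fin n, 0 ≤ π i.succ / s := fun i => div_nonneg (hπ0 _) hs0
      have hw1 : ∑ i : Fin n, π i.succ / s = 1 := by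
        rw [← Finset.sum_div, ← hs, div_self hpos.ne']
      have hi := ih (fun i => x i.succ) (fun i => hx _) (fun i => π i.succ / s) hw0 hw1
      have hy : ∑ i : Fin n, (π i.succ / s) • x i.succ ∈ X :=
        hX.sum_mem (fun i _ => hw0 i) hw1 (fun i _ => hx _)
      have hc := hf (hx 0) hy (l := π 0) ⟨hπ0 0, by linarith⟩
      have e1 : 1 - π 0 = s := by linarith
      rw [e1, Finset.smul_sum] at hc
      have e2 : ∀ i : Fin n, s • (π i.succ / s) • x i.succ = π i.succ • x i.succ := by
        intro i
        rw [smul_smul, mul_div_cancel₀ _ hpos.ne']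
      simp only [e2] at hc
      refine hc.trans ?_
      have hm := mul_le_mul_of_nonneg_left hi (Real.rpow_nonneg hs0 q)
      rw [Finset.mul_sum] at hm
      have e3 : ∀ i : Fin n, s ^ q * ((π i.succ / s) ^ q * f (x i.succ))
          = π i.succ ^ q * f (x i.succ) := by
        intro i
        rw [← mul_assoc, ← Real.mul_rpow hs0 (hw0 i), mul_div_cancel₀ _ hpos.ne']
      simp only [e3] at hm
      linarith
end

section
/- Let q ≥ 0, let φ : [0,1] → ℝ be twice continuously differentiable with φ'' > 0 on [0,1], and suppose that the function x ↦ −1/φ''(x) is (2−q)-convex on [0,1]. Define Ψ : [0,1]^n → ℝ by Ψ(z) = −Σ_{i=1}^n φ(z_i). Then for every weight vector π = (π_1,…,π_m) in the simplex Δ^{m-1}, the Jensen q-difference T_{q,Ψ}^π(y_1,…,y_m) = Ψ(Σ_{t=1}^m π_t y_t) − Σ_{t=1}^m π_t^q Ψ(y_t) is a convex function of (y_1,…,y_m) ∈ ([0,1]^n)^m. -/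
/-- Many-point version of `r`-concavity of `g`, unnormalised positive weights. -/
lemma multi_qconcave (r : ℝ) (g : ℝ → ℝ)
    (hg : ∀ x ∈ Set.Icc (0 : ℝ) 1, ∀ y ∈ Set.Icc (0 : ℝ) 1, ∀ l ∈ Set.Icc (0 : ℝ) 1,
      l ^ r * g x + (1 - l) ^ r * g y ≤ g (l * x + (1 - l) * y))
    {ι : Type*} (s : Finset ι) (hs : s.Nonempty) (w x : ι → ℝ)
    (hx : ∀ t ∈ s, x t ∈ Set.Icc (0 : ℝ) 1) (hw : ∀ t ∈ s, 0 < w t) :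
    0 < ∑ t ∈ s, w t ∧ (∑ t ∈ s, w t * x t) / (∑ t ∈ s, w t) ∈ Set.Icc (0 : ℝ) 1 ∧
    ∑ t ∈ s, w t ^ r * g (x t) ≤
      (∑ t ∈ s, w t) ^ r * g ((∑ t ∈ s, w t * x t) / (∑ t ∈ s, w t)) := by
  induction hs using Finset.Nonempty.cons_induction with
  | singleton a =>
    have h1 := hw a (by simp)
    have h2 := hx a (by simp)
    simp only [Finset.sum_singleton]
    rw [mul_div_cancel_left₀ _ h1.ne']
    exact ⟨h1, h2, le_rfl⟩
  | cons a s ha hs ih =>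
    have h1 := hw a (by simp)
    have h2 := hx a (by simp)
    obtain ⟨hS, hm, hi⟩ := ih (fun t ht => hx t (by simp [ht])) (fun t ht => hw t (by simp [ht]))
    simp only [Finset.sum_cons]
    generalize (∑ t ∈ s, w t) = S at *
    generalize (∑ t ∈ s, w t * x t) = M at *
    generalize w a = b at *
    have hT : 0 < b + S := by positivity
    have hl : b / (b + S) ∈ Set.Icc (0 : ℝ) 1 :=
      ⟨by positivity, by rw [div_le_one hT]; linarith⟩
    have h1l : 1 - b / (b + S) = S / (b + S) := by field_simp; ring
    have he : b / (b + S) * x a + (1 - b / (b + S)) * (M / S) = (b * x a + M) / (b + S) := by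
      rw [h1l]; field_simp
    have key := hg _ h2 _ hm _ hl
    rw [he, h1l, Real.div_rpow h1.le hT.le, Real.div_rpow hS.le hT.le] at key
    have hTr : 0 < (b + S) ^ r := Real.rpow_pos_of_pos hT r
    refine ⟨hT, ?_, ?_⟩
    · rw [← he]
      have := (convex_Icc (0 : ℝ) 1) h2 hm hl.1 (by linarith [hl.2] : 0 ≤ 1 - b / (b + S)) (by ring)
      simpa using this
    · have k2 := mul_le_mul_of_nonneg_left key hTr.le
      have : (b + S) ^ r * (b ^ r / (b + S) ^ r * g (x a) + S ^ r / (b + S) ^ r * g (M / S))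
        = b ^ r * g (x a) + S ^ r * g (M / S) := by field_simp
      rw [this] at k2
      linarith

/-- Nonnegativity of the Hessian. -/
lemma hess_nonneg (m : ℕ) (q : ℝ) (φ'' : ℝ → ℝ)
    (hpos : ∀ x ∈ Set.Icc (0 : ℝ) 1, 0 < φ'' x)
    (hqc : QConvexOn (2 - q) (Set.Icc (0 : ℝ) 1) (fun x => -(1 / φ'' x)))
    (π : Fin m → ℝ) (hπ0 : ∀ t, 0 ≤ π t) (hπ1 : ∑ t, π t = 1)
    (x h : Fin m → ℝ) (hx : ∀ t, x t ∈ Set.Icc (0 : ℝ) 1) :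
    (∑ t, π t * x t) ∈ Set.Icc (0 : ℝ) 1 ∧
    φ'' (∑ t, π t * x t) * (∑ t, π t * h t) ^ 2 ≤ ∑ t, π t ^ q * (φ'' (x t) * h t ^ 2) := by
  classical
  set s : Finset (Fin m) := Finset.univ.filter (fun t => 0 < π t) with hsdef
  have hz : ∀ f : Fin m → ℝ, ∑ t ∈ s, π t * f t = ∑ t, π t * f t := by
    intro f
    apply Finset.sum_subset (Finset.subset_univ _)
    intro t _ ht
    have : π t = 0 := by
      simp only [hsdef, Finset.mem_filter, Finset.mem_univ, true_and, not_lt] at ht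
      exact le_antisymm ht (hπ0 t)
    simp [this]
  have h1 : ∑ t ∈ s, π t = 1 := by simpa [hπ1] using hz (fun _ => 1)
  have hs : s.Nonempty := by
    by_contra hne
    rw [Finset.not_nonempty_iff_eq_empty] at hne
    simp [hne] at h1
  have hsp : ∀ t ∈ s, 0 < π t := fun t ht => (Finset.mem_filter.1 ht).2
  obtain ⟨-, hm, hg⟩ := multi_qconcave (2 - q) (fun x => 1 / φ'' x) (by
    intro x hx y hy l hl
    have := hqc hx hy hl
    simp only [smul_eq_mul] at this
    linarith) s hs π x (fun t _ => hx t) hsp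
  rw [h1, div_one, hz] at hm hg
  rw [Real.one_rpow, one_mul] at hg
  refine ⟨hm, ?_⟩
  have hp := hpos _ hm
  have cs := Finset.sum_sq_le_sum_mul_sum_of_sq_eq_mul s
    (r := fun t => π t * h t) (f := fun t => π t ^ (2 - q) * (1 / φ'' (x t)))
    (g := fun t => π t ^ q * (φ'' (x t) * h t ^ 2))
    (fun t ht => by have := hsp t ht; have := hpos _ (hx t); positivity)
    (fun t ht => by have := hsp t ht; have := hpos _ (hx t); positivity)
    (fun t ht => by
      have h3 := hsp t ht
      have h4 := hpos _ (hx t)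
      have h5 : π t ^ (2 - q) * π t ^ q = π t ^ 2 := by
        rw [← Real.rpow_add h3, sub_add_cancel, Real.rpow_two]
      calc (π t * h t) ^ 2 = (π t ^ (2 - q) * π t ^ q) * h t ^ 2 := by rw [h5]; ring
        _ = _ := by field_simp)
  rw [hz] at cs
  have nn : ∀ t, 0 ≤ π t ^ q * (φ'' (x t) * h t ^ 2) := fun t => by
    have := hpos _ (hx t)
    have := Real.rpow_nonneg (hπ0 t) q
    positivity
  have hsub : ∑ t ∈ s, π t ^ q * (φ'' (x t) * h t ^ 2) ≤ ∑ t, π t ^ q * (φ'' (x t) * h t ^ 2) :=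
    Finset.sum_le_sum_of_subset_of_nonneg (Finset.subset_univ _) (fun t _ _ => nn t)
  have k1 := cs.trans (mul_le_mul_of_nonneg_right hg (Finset.sum_nonneg (fun t _ => nn t)))
  refine le_trans ?_ hsub
  rw [one_div, inv_mul_eq_div, le_div_iff₀ hp] at k1
  linarith

/-- One-coordinate version. -/
lemma scalar_convex (m : ℕ) (q : ℝ) (φ φ' φ'' : ℝ → ℝ)
    (hd1 : ∀ x ∈ Set.Icc (0 : ℝ) 1, HasDerivAt φ (φ' x) x)
    (hd2 : ∀ x ∈ Set.Icc (0 : ℝ) 1, HasDerivAt φ' (φ'' x) x)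
    (hpos : ∀ x ∈ Set.Icc (0 : ℝ) 1, 0 < φ'' x)
    (hqc : QConvexOn (2 - q) (Set.Icc (0 : ℝ) 1) (fun x => -(1 / φ'' x)))
    (π : Fin m → ℝ) (hπ0 : ∀ t, 0 ≤ π t) (hπ1 : ∑ t, π t = 1)
    (y z : Fin m → ℝ) (hy : ∀ t, y t ∈ Set.Icc (0 : ℝ) 1) (hz : ∀ t, z t ∈ Set.Icc (0 : ℝ) 1) :
    ConvexOn ℝ (Set.Icc (0 : ℝ) 1) (fun s : ℝ =>
      ∑ t, π t ^ q * φ (y t + s * (z t - y t)) - φ (∑ t, π t * (y t + s * (z t - y t)))) := by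
  have hmem : ∀ s ∈ Set.Icc (0 : ℝ) 1, ∀ t, y t + s * (z t - y t) ∈ Set.Icc (0 : ℝ) 1 := by
    intro s hs t
    obtain ⟨a, b⟩ := hy t
    obtain ⟨c, d⟩ := hz t
    obtain ⟨e, f⟩ := hs
    constructor <;> nlinarith
  have hh : ∀ s ∈ Set.Icc (0 : ℝ) 1, _ := fun s hs =>
    hess_nonneg m q φ'' hpos hqc π hπ0 hπ1 (fun t => y t + s * (z t - y t))
      (fun t => z t - y t) (hmem s hs)
  have lin : ∀ (t : Fin m) (s : ℝ), HasDerivAt (fun s : ℝ => y t + s * (z t - y t)) (z t - y t) s := by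
    intro t s
    simpa using ((hasDerivAt_id s).mul_const (z t - y t)).const_add (y t)
  have linS : ∀ s : ℝ, HasDerivAt (fun s : ℝ => ∑ t, π t * (y t + s * (z t - y t)))
      (∑ t, π t * (z t - y t)) s := by
    intro s
    exact HasDerivAt.fun_sum (fun t _ => (lin t s).const_mul (π t))
  have D1 : ∀ s ∈ Set.Icc (0 : ℝ) 1, HasDerivAt (fun s : ℝ =>
      ∑ t, π t ^ q * φ (y t + s * (z t - y t)) - φ (∑ t, π t * (y t + s * (z t - y t))))
      (∑ t, π t ^ q * (φ' (y t + s * (z t - y t)) * (z t - y t))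
        - φ' (∑ t, π t * (y t + s * (z t - y t))) * ∑ t, π t * (z t - y t)) s := by
    intro s hs
    refine HasDerivAt.sub (HasDerivAt.fun_sum (fun t _ => HasDerivAt.const_mul _ ?_)) ?_
    · exact HasDerivAt.comp s (hd1 _ (hmem s hs t)) (lin t s)
    · exact HasDerivAt.comp s (hd1 _ (hh s hs).1) (linS s)
  have D2 : ∀ s ∈ Set.Icc (0 : ℝ) 1, HasDerivAt (fun s : ℝ =>
      (∑ t, π t ^ q * (φ' (y t + s * (z t - y t)) * (z t - y t))
        - φ' (∑ t, π t * (y t + s * (z t - y t))) * ∑ t, π t * (z t - y t)))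
      (∑ t, π t ^ q * (φ'' (y t + s * (z t - y t)) * (z t - y t) * (z t - y t))
        - φ'' (∑ t, π t * (y t + s * (z t - y t))) * (∑ t, π t * (z t - y t))
          * (∑ t, π t * (z t - y t))) s := by
    intro s hs
    refine HasDerivAt.sub (HasDerivAt.fun_sum (fun t _ => HasDerivAt.const_mul _
      (HasDerivAt.mul_const ?_ _))) (HasDerivAt.mul_const ?_ _)
    · exact HasDerivAt.comp s (hd2 _ (hmem s hs t)) (lin t s)
    · exact HasDerivAt.comp s (hd2 _ (hh s hs).1) (linS s)
  refine convexOn_of_hasDerivWithinAt2_nonneg (convex_Icc 0 1)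
    (fun s hs => (D1 s hs).continuousAt.continuousWithinAt)
    (fun s hs => (D1 s (interior_subset hs)).hasDerivWithinAt)
    (fun s hs => (D2 s (interior_subset hs)).hasDerivWithinAt) ?_
  intro s hs
  have := (hh s (interior_subset hs)).2
  simp only [pow_two, ← mul_assoc] at this ⊢
  linarith

/-- Sufficiency in Proposition 4 (Burbea–Rao type): if `φ : [0,1] → ℝ` is twice
continuously differentiable with `φ'' > 0` on `[0,1]`, and `-1/φ''` is `(2-q)`-convex
on `[0,1]`, then the Jensen `q`-difference
`T(y₁,…,y_m) = Ψ(∑ π_t y_t) - ∑ π_t^q Ψ(y_t)`, with `Ψ(z) = -∑ᵢ φ(zᵢ)`,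
is convex on `([0,1]^n)^m`. -/
theorem jensen_q_difference_convex_of_qconvex (n m : ℕ) (q : ℝ) (hq : 0 ≤ q)
    (φ φ' φ'' : ℝ → ℝ)
    (hd1 : ∀ x ∈ Set.Icc (0 : ℝ) 1, HasDerivAt φ (φ' x) x)
    (hd2 : ∀ x ∈ Set.Icc (0 : ℝ) 1, HasDerivAt φ' (φ'' x) x)
    (hc : ContinuousOn φ'' (Set.Icc (0 : ℝ) 1))
    (hpos : ∀ x ∈ Set.Icc (0 : ℝ) 1, 0 < φ'' x)
    (hqc : QConvexOn (2 - q) (Set.Icc (0 : ℝ) 1) (fun x => -(1 / φ'' x)))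
    (π : Fin m → ℝ) (hπ0 : ∀ t, 0 ≤ π t) (hπ1 : ∑ t, π t = 1) :
    ConvexOn ℝ {y : Fin m → Fin n → ℝ | ∀ t i, y t i ∈ Set.Icc (0 : ℝ) 1}
      (fun y => (-(∑ i, φ (∑ t, π t * y t i))) - ∑ t, π t ^ q * (-(∑ i, φ (y t i)))) := by
  refine ⟨?_, ?_⟩
  · intro y hy z hz a b ha hb hab t i
    exact (convex_Icc (0 : ℝ) 1) (hy t i) (hz t i) ha hb hab
  intro y hy z hz a b ha hb hab
  have ha' : a = 1 - b := by linarith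
  have e : ∀ y : Fin m → Fin n → ℝ,
      (-(∑ i, φ (∑ t, π t * y t i))) - ∑ t, π t ^ q * (-(∑ i, φ (y t i)))
      = ∑ i, (∑ t, π t ^ q * φ (y t i) - φ (∑ t, π t * y t i)) := by
    intro y
    rw [Finset.sum_sub_distrib, Finset.sum_comm]
    simp only [mul_neg, Finset.sum_neg_distrib, Finset.mul_sum]
    ring
  simp only [e, smul_eq_mul, Finset.mul_sum]
  rw [← Finset.sum_add_distrib]
  apply Finset.sum_le_sum
  intro i _
  have key := (scalar_convex m q φ φ' φ'' hd1 hd2 hpos hqc π hπ0 hπ1 (fun t => y t i)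
    (fun t => z t i) (fun t => hy t i) (fun t => hz t i)).2
    (Set.left_mem_Icc.2 zero_le_one) (Set.right_mem_Icc.2 zero_le_one) ha hb hab
  have e2 : ∀ t, (a • y + b • z) t i = y t i + b * (z t i - y t i) := by
    intro t
    simp only [Pi.add_apply, Pi.smul_apply, smul_eq_mul, ha']
    ring
  simp only [e2]
  simpa using key
end

section
/- Let q ≥ 0, let φ : [0,1] → ℝ be twice continuously differentiable, and define Ψ : [0,1]^n → ℝ by Ψ(z) = −Σ_{i=1}^n φ(z_i). Fix m ≥ 2 and a weight vector π = (π_1,…,π_m) in the simplex Δ^{m-1} with all π_t > 0. If the Jensen q-difference T_{q,Ψ}^π(y_1,…,y_m) = Ψ(Σ_{t=1}^m π_t y_t) − Σ_{t=1}^m π_t^q Ψ(y_t) is convex on ([0,1]^n)^m, then φ is convex on [0,1]. -/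
set_option maxHeartbeats 2000000 in
/-- Necessity in Proposition 4 (Burbea–Rao type), part 1: if `φ : [0,1] → ℝ` is twice
continuously differentiable and the Jensen `q`-difference
`T(y₁,…,y_m) = Ψ(∑ π_t y_t) - ∑ π_t^q Ψ(y_t)`, with `Ψ(z) = -∑ᵢ φ(zᵢ)`,
is convex on `([0,1]^n)^m` (for `m ≥ 2` and strictly positive weights `π` in the
simplex), then `φ` is convex on `[0,1]`. -/
theorem convex_phi_of_jensen_q_difference_convex (n m : ℕ) (hn : 1 ≤ n) (hm : 2 ≤ m)
    (q : ℝ) (hq : 0 ≤ q)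
    (φ φ' φ'' : ℝ → ℝ)
    (hd1 : ∀ x ∈ Set.Icc (0 : ℝ) 1, HasDerivAt φ (φ' x) x)
    (hd2 : ∀ x ∈ Set.Icc (0 : ℝ) 1, HasDerivAt φ' (φ'' x) x)
    (hc : ContinuousOn φ'' (Set.Icc (0 : ℝ) 1))
    (π : Fin m → ℝ) (hπ0 : ∀ t, 0 < π t) (hπ1 : ∑ t, π t = 1)
    (hconv : ConvexOn ℝ {y : Fin m → Fin n → ℝ | ∀ t i, y t i ∈ Set.Icc (0 : ℝ) 1}
      (fun y => (-(∑ i, φ (∑ t, π t * y t i))) - ∑ t, π t ^ q * (-(∑ i, φ (y t i))))) :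
    ConvexOn ℝ (Set.Icc (0 : ℝ) 1) φ := by
  have key : ∀ x ∈ Set.Ioo (0 : ℝ) 1, 0 ≤ φ'' x := by
    intro x hx
    obtain ⟨v, hv0, hv1, t0, ht0⟩ : ∃ v : Fin m → ℝ, (∑ t, π t * v t = 0) ∧ (∀ t, |v t| ≤ 1) ∧
        ∃ t0, v t0 ≠ 0 := by
      have hle : ∀ t, π t ≤ 1 := fun t => by
        rw [← hπ1]
        exact Finset.single_le_sum (fun i _ => (hπ0 i).le) (Finset.mem_univ t)
      let a : Fin m := ⟨0, by omega⟩
      let b : Fin m := ⟨1, by omega⟩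
      have hab : a ≠ b := by simp [a, b]
      refine ⟨fun t => (if t = a then π b else 0) + (if t = b then -π a else 0), ?_, ?_, a, ?_⟩
      · simp only [mul_add, Finset.sum_add_distrib, mul_ite, mul_zero, Finset.sum_ite_eq',
          Finset.mem_univ, if_true]
        ring
      · intro t
        have ha := hπ0 a
        have hb := hπ0 b
        have ha' := hle a
        have hb' := hle b
        by_cases h1 : t = a
        · have h2 : t ≠ b := h1 ▸ hab
          simp only [h1, if_true, if_neg hab, add_zero]
          rw [abs_le]; constructor <;> linarith
        · by_cases h2 : t = b
          · simp only [h2, if_true, if_neg hab.symm, zero_add]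
            rw [abs_le]; constructor <;> linarith
          · simp [h1, h2]
      · simp only [if_true, if_neg hab, add_zero]
        exact (hπ0 b).ne'
    obtain ⟨δ, hδ, hδx, hδ1⟩ : ∃ δ > 0, δ ≤ x ∧ δ ≤ 1 - x :=
      ⟨min x (1 - x), lt_min hx.1 (by linarith [hx.2]), min_le_left _ _, min_le_right _ _⟩
    have hmem : ∀ s ∈ Set.Ioo (-δ) δ, ∀ t, x + s * v t ∈ Set.Icc (0 : ℝ) 1 := by
      intro s hs t
      have h1 : |s * v t| ≤ δ := by
        rw [abs_mul]
        have : |s| ≤ δ := abs_le.2 ⟨hs.1.le, hs.2.le⟩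
        calc |s| * |v t| ≤ δ * 1 := mul_le_mul this (hv1 t) (abs_nonneg _) hδ.le
          _ = δ := mul_one _
      rw [abs_le] at h1
      constructor <;> linarith [h1.1, h1.2]
    have hT : ∀ s : ℝ, (-(∑ _i : Fin n, φ (∑ t, π t * (x + s * v t))))
        - ∑ t, π t ^ q * (-(∑ _i : Fin n, φ (x + s * v t)))
        = n * (∑ t, π t ^ q * φ (x + s * v t)) - n * φ x := by
      intro s
      have h1 : ∑ t, π t * (x + s * v t) = x := by
        have : ∑ t, π t * (x + s * v t) = (∑ t, π t) * x + s * ∑ t, π t * v t := by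
          rw [Finset.sum_mul, Finset.mul_sum, ← Finset.sum_add_distrib]
          exact Finset.sum_congr rfl fun t _ => by ring
        rw [this, hπ1, hv0]; ring
      rw [h1]
      simp only [Finset.sum_const, Finset.card_univ, Fintype.card_fin, nsmul_eq_mul, mul_neg,
        Finset.sum_neg_distrib, Finset.mul_sum]
      have h2 : ∑ t, π t ^ q * (n * φ (x + s * v t)) = ∑ t, n * (π t ^ q * φ (x + s * v t)) :=
        Finset.sum_congr rfl fun t _ => by ring
      rw [h2]; ring
    have hnpos : (0 : ℝ) < n := by exact_mod_cast hn
    have hcv : ConvexOn ℝ (Set.Ioo (-δ) δ) (fun s => ∑ t, π t ^ q * φ (x + s * v t)) := by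
      refine ⟨convex_Ioo _ _, ?_⟩
      intro s hs s' hs' a b ha hb hab
      have h := hconv.2 (x := fun t _ => x + s * v t) (fun t _ => hmem s hs t)
        (y := fun t _ => x + s' * v t) (fun t _ => hmem s' hs' t) ha hb hab
      have he : a • (fun (t : Fin m) (_ : Fin n) => x + s * v t) + b • (fun t _ => x + s' * v t)
          = fun t _ => x + (a * s + b * s') * v t := by
        funext t i
        simp only [Pi.add_apply, Pi.smul_apply, smul_eq_mul]
        have : b = 1 - a := by linarith
        subst this; ring
      rw [he] at h
      simp only [hT, smul_eq_mul] at h ⊢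
      have hb' : b = 1 - a := by linarith
      subst hb'
      refine le_of_mul_le_mul_left ?_ hnpos
      linarith
    have hD1 : ∀ s ∈ Set.Ioo (-δ) δ, HasDerivAt (fun s => ∑ t, π t ^ q * φ (x + s * v t))
        (∑ t, π t ^ q * (φ' (x + s * v t) * v t)) s := by
      intro s hs
      refine HasDerivAt.fun_sum fun t _ => ?_
      refine HasDerivAt.const_mul _ ?_
      have := ((hasDerivAt_id s).mul_const (v t)).const_add x
      simp only [id, one_mul] at this
      exact (hd1 _ (hmem s hs t)).comp s this
    have h0 : (0 : ℝ) ∈ Set.Ioo (-δ) δ := ⟨by linarith, hδ⟩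
    have hD2 : HasDerivAt (fun s => ∑ t, π t ^ q * (φ' (x + s * v t) * v t))
        (∑ t, π t ^ q * (φ'' x * v t * v t)) 0 := by
      refine HasDerivAt.fun_sum fun t _ => ?_
      refine HasDerivAt.const_mul _ (HasDerivAt.mul_const ?_ _)
      have := ((hasDerivAt_id (0 : ℝ)).mul_const (v t)).const_add x
      simp only [id, one_mul] at this
      have h2 := hd2 _ (hmem 0 h0 t)
      have h3 := h2.comp (0 : ℝ) this
      simpa [Function.comp_def] using h3
    have hmono : MonotoneOn (fun s => ∑ t, π t ^ q * (φ' (x + s * v t) * v t))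
        (Set.Ioo (-δ) δ) := by
      have := hcv.monotoneOn_deriv (fun s hs => (hD1 s hs).differentiableAt)
      exact this.congr fun s hs => (hD1 s hs).deriv
    have hnn : 0 ≤ ∑ t, π t ^ q * (φ'' x * v t * v t) := by
      refine ge_of_tendsto (hasDerivAt_iff_tendsto_slope.1 hD2) ?_
      have hnh : ∀ᶠ s in nhdsWithin (0 : ℝ) {0}ᶜ, s ∈ Set.Ioo (-δ) δ :=
        nhdsWithin_le_nhds (Ioo_mem_nhds h0.1 h0.2)
      filter_upwards [hnh] with s hs
      rw [slope_def_field]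
      rcases le_total 0 s with h | h
      · exact div_nonneg (sub_nonneg.2 (hmono h0 hs h)) (by linarith)
      · exact div_nonneg_of_nonpos (sub_nonpos.2 (hmono hs h0 h)) (by linarith)
    have hfac : ∑ t, π t ^ q * (φ'' x * v t * v t) = φ'' x * ∑ t, π t ^ q * (v t * v t) := by
      rw [Finset.mul_sum]
      exact Finset.sum_congr rfl fun t _ => by ring
    rw [hfac] at hnn
    have hpos : 0 < ∑ t, π t ^ q * (v t * v t) :=
      Finset.sum_pos' (fun t _ => mul_nonneg (Real.rpow_nonneg (hπ0 t).le _) (mul_self_nonneg _))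
        ⟨t0, Finset.mem_univ _, mul_pos (Real.rpow_pos_of_pos (hπ0 t0) _)
          (mul_self_pos.2 ht0)⟩
    exact nonneg_of_mul_nonneg_left hnn hpos
  refine convexOn_of_hasDerivWithinAt2_nonneg (f' := φ') (f'' := φ'') (convex_Icc _ _)
    (fun x hx => (hd1 x hx).continuousAt.continuousWithinAt)
    (fun x hx => (hd1 x (interior_subset hx)).hasDerivWithinAt)
    (fun x hx => (hd2 x (interior_subset hx)).hasDerivWithinAt)
    (fun x hx => key x (by rwa [interior_Icc] at hx))
end

section
/- Let q ≥ 0, let φ : [0,1] → ℝ be twice continuously differentiable with φ'' > 0 on [0,1], and define Ψ : [0,1]^n → ℝ by Ψ(z) = −Σ_{i=1}^n φ(z_i). Fix m ≥ 2 and a weight vector π = (π_1,…,π_m) in the simplex Δ^{m-1} with all π_t > 0. If the Jensen q-difference T_{q,Ψ}^π(y_1,…,y_m) = Ψ(Σ_{t=1}^m π_t y_t) − Σ_{t=1}^m π_t^q Ψ(y_t) is convex on ([0,1]^n)^m, then the function x ↦ −1/φ''(x) is (2−q)-convex on [0,1] with respect to convex combinations weighted by π, i.e. −1/φ''(Σ_t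 π_t a_t) ≤ −Σ_t π_t^{2−q} / φ''(a_t) for all a_1,…,a_m ∈ [0,1]. -/
open Set Filter Topology

theorem hess_interior (n m : ℕ) (hn : 1 ≤ n)
    (q : ℝ)
    (φ φ' φ'' : ℝ → ℝ)
    (hd1 : ∀ x ∈ Set.Icc (0 : ℝ) 1, HasDerivAt φ (φ' x) x)
    (hd2 : ∀ x ∈ Set.Icc (0 : ℝ) 1, HasDerivAt φ' (φ'' x) x)
    (π : Fin m → ℝ) (hπ0 : ∀ t, 0 < π t) (hπ1 : ∑ t, π t = 1)
    (hconv : ConvexOn ℝ {y : Fin m → Fin n → ℝ | ∀ t i, y t i ∈ Set.Icc (0 : ℝ) 1}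
      (fun y => (-(∑ i, φ (∑ t, π t * y t i))) - ∑ t, π t ^ q * (-(∑ i, φ (y t i)))))
    (a v : Fin m → ℝ) (ha : ∀ t, a t ∈ Set.Ioo (0 : ℝ) 1) :
    φ'' (∑ t, π t * a t) * (∑ t, π t * v t) ^ 2 ≤ ∑ t, π t ^ q * φ'' (a t) * v t ^ 2 := by
  have hn0 : (0 : ℝ) < n := by exact_mod_cast hn
  set S : Set ℝ := {s | ∀ t, a t + s * v t ∈ Set.Icc (0 : ℝ) 1} with hS
  set h : ℝ → ℝ := fun s => ∑ t, π t ^ q * φ (a t + s * v t)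
    - φ ((∑ t, π t * a t) + s * ∑ t, π t * v t) with hh
  set h' : ℝ → ℝ := fun s => ∑ t, π t ^ q * (φ' (a t + s * v t) * v t)
    - φ' ((∑ t, π t * a t) + s * ∑ t, π t * v t) * (∑ t, π t * v t) with hh'
  have hcomb : ∀ s, ∑ t, π t * (a t + s * v t) = (∑ t, π t * a t) + s * ∑ t, π t * v t := by
    intro s
    rw [Finset.mul_sum, ← Finset.sum_add_distrib]
    exact Finset.sum_congr rfl fun t _ => by ring
  have hmem : ∀ s ∈ S, (∑ t, π t * a t) + s * ∑ t, π t * v t ∈ Set.Icc (0 : ℝ) 1 := by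
    intro s hs
    rw [← hcomb]
    have := (convex_Icc (0 : ℝ) 1).sum_mem (t := Finset.univ) (w := π)
      (z := fun t => a t + s * v t) (fun t _ => (hπ0 t).le) hπ1 (fun t _ => hs t)
    simpa [smul_eq_mul] using this
  have hSn : S ∈ 𝓝 (0 : ℝ) := by
    have : ∀ᶠ s in 𝓝 (0 : ℝ), ∀ t, a t + s * v t ∈ Set.Icc (0 : ℝ) 1 := by
      rw [eventually_all]
      intro t
      have hcont : Tendsto (fun s : ℝ => a t + s * v t) (𝓝 0) (𝓝 (a t)) := by
        have : Continuous (fun s : ℝ => a t + s * v t) := by fun_prop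
        simpa using this.tendsto 0
      exact hcont.eventually (Icc_mem_nhds (ha t).1 (ha t).2)
    exact this
  have h0S : (0 : ℝ) ∈ S := mem_of_mem_nhds hSn
  have hlin : ∀ (b c s : ℝ), HasDerivAt (fun s : ℝ => b + s * c) c s := by
    intro b c s
    simpa using ((hasDerivAt_id s).mul_const c).const_add b
  have hD1 : ∀ s ∈ S, HasDerivAt h (h' s) s := by
    intro s hs
    refine HasDerivAt.sub ?_ ?_
    · refine HasDerivAt.fun_sum fun t _ => ?_
      exact ((hd1 _ (hs t)).comp s (hlin (a t) (v t) s)).const_mul _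
    · exact (hd1 _ (hmem s hs)).comp s (hlin _ _ s)
  have hD2 : HasDerivAt h' (∑ t, π t ^ q * (φ'' (a t + 0 * v t) * v t * v t)
      - φ'' ((∑ t, π t * a t) + 0 * ∑ t, π t * v t) * (∑ t, π t * v t) * (∑ t, π t * v t)) 0 := by
    refine HasDerivAt.sub ?_ ?_
    · refine HasDerivAt.fun_sum fun t _ => ?_
      exact (((hd2 _ (h0S t)).comp 0 (hlin (a t) (v t) 0)).mul_const _).const_mul _
    · exact ((hd2 _ (hmem 0 h0S)).comp 0 (hlin _ _ 0)).mul_const _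
  have hF : ∀ s, (-(∑ _i : Fin n, φ (∑ t, π t * (a t + s * v t))))
      - ∑ t, π t ^ q * (-(∑ _i : Fin n, φ (a t + s * v t))) = n * h s := by
    intro s
    simp only [hcomb, hh, Finset.sum_const, Finset.card_univ, Fintype.card_fin, nsmul_eq_mul,
      mul_neg, Finset.sum_neg_distrib, mul_sub, Finset.mul_sum]
    have : ∑ t, π t ^ q * (n * φ (a t + s * v t)) = ∑ t, n * (π t ^ q * φ (a t + s * v t)) :=
      Finset.sum_congr rfl fun t _ => by ring
    rw [this]; ring
  have hSc : ∀ x ∈ S, ∀ y ∈ S, ∀ b c : ℝ, 0 ≤ b → 0 ≤ c → b + c = 1 → b * x + c * y ∈ S := by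
    intro x hx y hy b c hb hc hbc t
    have := (convex_Icc (0 : ℝ) 1) (hx t) (hy t) hb hc hbc
    have e : a t + (b * x + c * y) * v t = b • (a t + x * v t) + c • (a t + y * v t) := by
      simp only [smul_eq_mul]; linear_combination (-(a t)) * hbc
    rw [e]; exact this
  have hcv : ConvexOn ℝ S h := by
    refine ⟨fun x hx y hy b c hb hc hbc => hSc x hx y hy b c hb hc hbc, ?_⟩
    intro x hx y hy b c hb hc hbc
    have key := hconv.2 (x := fun t _ => a t + x * v t) (fun t _ => hx t)
      (y := fun t _ => a t + y * v t) (fun t _ => hy t) hb hc hbc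
    have e : (b • (fun (t : Fin m) (_ : Fin n) => a t + x * v t)
        + c • (fun (t : Fin m) (_ : Fin n) => a t + y * v t))
        = fun t _ => a t + (b * x + c * y) * v t := by
      funext t i
      simp only [Pi.add_apply, Pi.smul_apply, smul_eq_mul]; linear_combination (a t) * hbc
    rw [e] at key
    simp only [hF, smul_eq_mul] at key
    simp only [smul_eq_mul]
    have : (n : ℝ) * h (b * x + c * y) ≤ n * (b * h x + c * h y) := by linarith
    exact le_of_mul_le_mul_left this hn0
  have hmono : MonotoneOn h' S := by
    have h1 := hcv.monotoneOn_deriv (fun x hx => (hD1 x hx).differentiableAt)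
    exact h1.congr fun x hx => (hD1 x hx).deriv
  have hnn := hmono.derivWithin_nonneg (x := (0 : ℝ))
  rw [derivWithin_of_mem_nhds hSn, hD2.deriv] at hnn
  simp only [zero_mul, add_zero] at hnn
  have e : ∑ t, π t ^ q * φ'' (a t) * v t ^ 2 = ∑ t, π t ^ q * (φ'' (a t) * v t * v t) :=
    Finset.sum_congr rfl fun t _ => by ring
  rw [e]
  nlinarith [hnn]

/-- Necessity in Proposition 4 (Burbea–Rao type), part 2: if `φ : [0,1] → ℝ` is twice
continuously differentiable with `φ'' > 0` on `[0,1]`, and the Jensen `q`-difference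
`T(y₁,…,y_m) = Ψ(∑ π_t y_t) - ∑ π_t^q Ψ(y_t)`, with `Ψ(z) = -∑ᵢ φ(zᵢ)`,
is convex on `([0,1]^n)^m` (for `m ≥ 2` and strictly positive weights `π` in the
simplex), then `-1/φ''` is `(2-q)`-convex on `[0,1]` with respect to convex
combinations weighted by `π`:
`-1/φ''(∑ π_t a_t) ≤ -∑ π_t^(2-q) / φ''(a_t)` for all `a₁,…,a_m ∈ [0,1]`. -/
theorem qconvex_of_jensen_q_difference_convex (n m : ℕ) (hn : 1 ≤ n) (hm : 2 ≤ m)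
    (q : ℝ) (hq : 0 ≤ q)
    (φ φ' φ'' : ℝ → ℝ)
    (hd1 : ∀ x ∈ Set.Icc (0 : ℝ) 1, HasDerivAt φ (φ' x) x)
    (hd2 : ∀ x ∈ Set.Icc (0 : ℝ) 1, HasDerivAt φ' (φ'' x) x)
    (hc : ContinuousOn φ'' (Set.Icc (0 : ℝ) 1))
    (hpos : ∀ x ∈ Set.Icc (0 : ℝ) 1, 0 < φ'' x)
    (π : Fin m → ℝ) (hπ0 : ∀ t, 0 < π t) (hπ1 : ∑ t, π t = 1)
    (hconv : ConvexOn ℝ {y : Fin m → Fin n → ℝ | ∀ t i, y t i ∈ Set.Icc (0 : ℝ) 1}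
      (fun y => (-(∑ i, φ (∑ t, π t * y t i))) - ∑ t, π t ^ q * (-(∑ i, φ (y t i))))) :
    ∀ a : Fin m → ℝ, (∀ t, a t ∈ Set.Icc (0 : ℝ) 1) →
      -(1 / φ'' (∑ t, π t * a t)) ≤ -∑ t, π t ^ (2 - q) / φ'' (a t) := by
  intro a ha
  have hmemc : ∀ b : Fin m → ℝ, (∀ t, b t ∈ Set.Icc (0 : ℝ) 1) →
      ∑ t, π t * b t ∈ Set.Icc (0 : ℝ) 1 := by
    intro b hb
    have := (convex_Icc (0 : ℝ) 1).sum_mem (t := Finset.univ) (w := π)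
      (z := b) (fun t _ => (hπ0 t).le) hπ1 (fun t _ => hb t)
    simpa [smul_eq_mul] using this
  -- the Hessian inequality on the closed cube
  have hess : ∀ v : Fin m → ℝ, φ'' (∑ t, π t * a t) * (∑ t, π t * v t) ^ 2
      ≤ ∑ t, π t ^ q * φ'' (a t) * v t ^ 2 := by
    intro v
    set b : ℝ → Fin m → ℝ := fun e t => a t + e * (1 / 2 - a t) with hb
    have hbI : ∀ e ∈ Ioo (0 : ℝ) 1, ∀ t, b e t ∈ Ioo (0 : ℝ) 1 := by
      intro e he t
      obtain ⟨h0, h1⟩ := ha t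
      obtain ⟨e0, e1⟩ := he
      constructor <;> simp only [hb] <;> nlinarith
    have hev : ∀ᶠ e in 𝓝[>] (0 : ℝ), e ∈ Ioo (0 : ℝ) 1 := Ioo_mem_nhdsGT one_pos
    have hT1 : ∀ t, Tendsto (fun e => φ'' (b e t)) (𝓝[>] 0) (𝓝 (φ'' (a t))) := by
      intro t
      refine (hc (a t) (ha t)).tendsto.comp (tendsto_nhdsWithin_iff.2 ⟨?_, ?_⟩)
      · have : Continuous (fun e => b e t) := by simp only [hb]; fun_prop
        have h2 := this.tendsto 0
        simp only [hb, zero_mul, add_zero] at h2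
        exact h2.mono_left nhdsWithin_le_nhds
      · exact hev.mono fun e he => Ioo_subset_Icc_self (hbI e he t)
    have hT2 : Tendsto (fun e => φ'' (∑ t, π t * b e t)) (𝓝[>] 0) (𝓝 (φ'' (∑ t, π t * a t))) := by
      refine (hc _ (hmemc a ha)).tendsto.comp (tendsto_nhdsWithin_iff.2 ⟨?_, ?_⟩)
      · have : Continuous (fun e => ∑ t, π t * b e t) := by simp only [hb]; fun_prop
        have h2 := this.tendsto 0
        simp only [hb, zero_mul, add_zero] at h2
        exact h2.mono_left nhdsWithin_le_nhds
      · exact hev.mono fun e he => hmemc _ fun t => Ioo_subset_Icc_self (hbI e he t)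
    refine le_of_tendsto_of_tendsto (hT2.mul_const _)
      (tendsto_finsetSum Finset.univ fun t _ => ((hT1 t).const_mul (π t ^ q)).mul_const (v t ^ 2)) ?_
    filter_upwards [hev] with e he
    exact hess_interior n m hn q φ φ' φ'' hd1 hd2 π hπ0 hπ1 hconv (b e) v (hbI e he)
  have H := hess (fun t => π t ^ (1 - q) / φ'' (a t))
  set S : ℝ := ∑ t, π t ^ (2 - q) / φ'' (a t) with hS
  have e1 : ∑ t, π t * (π t ^ (1 - q) / φ'' (a t)) = S := by
    refine Finset.sum_congr rfl fun t _ => ?_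
    rw [show (2 - q) = 1 + (1 - q) by ring, Real.rpow_add (hπ0 t), Real.rpow_one]
    ring
  have e2 : ∑ t, π t ^ q * φ'' (a t) * (π t ^ (1 - q) / φ'' (a t)) ^ 2 = S := by
    refine Finset.sum_congr rfl fun t _ => ?_
    rw [show (2 - q) = q + ((1 - q) + (1 - q)) by ring, Real.rpow_add (hπ0 t),
      Real.rpow_add (hπ0 t)]
    have := (hpos _ (ha t)).ne'
    field_simp
  rw [e1, e2] at H
  have hSpos : 0 < S := by
    haveI : Nonempty (Fin m) := ⟨⟨0, by omega⟩⟩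
    exact Finset.sum_pos (fun t _ => div_pos (Real.rpow_pos_of_pos (hπ0 t) _) (hpos _ (ha t)))
      Finset.univ_nonempty
  have hA := hpos _ (hmemc a ha)
  apply neg_le_neg
  rw [le_div_iff₀ hA]
  have : (S * φ'' (∑ t, π t * a t)) * S ≤ 1 * S := by nlinarith
  exact le_of_mul_le_mul_right this hSpos
end

section
/- Let q ∈ [0,1), let π = (π_1,…,π_m) be a weight vector in the simplex Δ^{m-1}, and for i = 1,…,l let (p_1^{(i)},…,p_m^{(i)}) be an m-tuple of probability vectors in Δ^{n-1}. Then for every (λ_1,…,λ_l) in the simplex Δ^{l-1}, the Jensen-Tsallis q-difference satisfies T_q^π(Σ_{i=1}^l λ_i p_1^{(i)}, …, Σ_{i=1}^l λ_i p_m^{(i)}) ≤ Σ_{i=1}^l λ_i T_q^π(p_1^{(i)},…,p_m^{(i)}); that is, T_q^π is jointly convex on (Δ^{n-1})^m. -/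
open Finset

/-- The Tsallis `q`-entropy of a finite nonnegative vector `p`:
`S_q(p) = (1/(q-1)) * (1 - ∑ i, p i ^ q)`. -/
noncomputable def tsallisEntropy {ι : Type*} [Fintype ι] (q : ℝ) (p : ι → ℝ) : ℝ :=
  (1 / (q - 1)) * (1 - ∑ i, p i ^ q)

/-- The Jensen-Tsallis `q`-difference of `p₁,…,p_m` with weights `π`:
`T_q^π(p₁,…,p_m) = S_q(∑ⱼ πⱼ pⱼ) - ∑ⱼ πⱼ^q S_q(pⱼ)`. -/
noncomputable def jensenTsallis {n m : ℕ} (q : ℝ) (π : Fin m → ℝ)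
    (p : Fin m → Fin n → ℝ) : ℝ :=
  tsallisEntropy q (∑ j, π j • p j) - ∑ j, π j ^ q * tsallisEntropy q (p j)

theorem holder_aux {m : ℕ} (q : ℝ) (hq0 : 0 < q) (hq1 : q < 1) (Y y : Fin m → ℝ)
    (hY : ∀ j, 0 ≤ Y j) (hy : ∀ j, 0 ≤ y j) :
    ∑ j, Y j ^ (1 - q) * y j ^ q ≤ (∑ j, Y j) ^ (1 - q) * (∑ j, y j) ^ q := by
  have h1 : 0 < 1 - q := by linarith
  have hc : Real.HolderConjugate (1 / (1 - q)) (1 / q) := by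
    rw [Real.holderConjugate_iff]
    refine ⟨by rw [lt_div_iff₀ h1]; linarith, by simp⟩
  have h := Real.inner_le_Lp_mul_Lq_of_nonneg Finset.univ hc
    (f := fun j => Y j ^ (1 - q)) (g := fun j => y j ^ q)
    (fun j _ => Real.rpow_nonneg (hY j) _) (fun j _ => Real.rpow_nonneg (hy j) _)
  have e1 : ∀ j, (Y j ^ (1 - q)) ^ (1 / (1 - q)) = Y j := fun j => by
    rw [← Real.rpow_mul (hY j), mul_one_div_cancel h1.ne', Real.rpow_one]
  have e2 : ∀ j, (y j ^ q) ^ (1 / q) = y j := fun j => by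
    rw [← Real.rpow_mul (hy j), mul_one_div_cancel hq0.ne', Real.rpow_one]
  simpa only [e1, e2, one_div_one_div] using h

theorem key_aux {l m : ℕ} (q : ℝ) (hq0 : 0 < q) (hq1 : q < 1) (y : Fin l → Fin m → ℝ)
    (hy : ∀ i j, 0 ≤ y i j)
    (lam : Fin l → ℝ) (hlam0 : ∀ i, 0 ≤ lam i) (hlam1 : ∑ i, lam i = 1) :
    (∑ j, ∑ i, lam i * y i j) ^ q - ∑ j, (∑ i, lam i * y i j) ^ q ≤
      ∑ i, lam i * ((∑ j, y i j) ^ q - ∑ j, y i j ^ q) := by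
  obtain ⟨Y, hYd⟩ : ∃ Y : Fin m → ℝ, ∀ j, Y j = ∑ i, lam i * y i j := ⟨_, fun _ => rfl⟩
  simp only [← hYd]
  have hY : ∀ j, 0 ≤ Y j := fun j => by
    rw [hYd]; exact Finset.sum_nonneg fun i _ => mul_nonneg (hlam0 i) (hy i j)
  obtain ⟨S, hS⟩ : ∃ S, S = ∑ j, Y j := ⟨_, rfl⟩
  rw [← hS]
  have hS0 : 0 ≤ S := hS ▸ Finset.sum_nonneg fun j _ => hY j
  have hYS : ∀ j, Y j ≤ S := fun j => by
    rw [hS]; exact Finset.single_le_sum (fun j _ => hY j) (Finset.mem_univ j)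
  have A : ∀ j, S ^ (q - 1) * (Y j - ∑ i, lam i * (Y j ^ (1 - q) * y i j ^ q)) ≤
      Y j ^ q - ∑ i, lam i * y i j ^ q := by
    intro j
    rcases (hY j).eq_or_lt with h | h
    · have hz : ∀ i, lam i * y i j = 0 := by
        have := h.trans (hYd j)
        intro i
        exact (Finset.sum_eq_zero_iff_of_nonneg
          (fun i _ => mul_nonneg (hlam0 i) (hy i j))).1 this.symm i (Finset.mem_univ i)
      have hz2 : ∀ i, lam i * y i j ^ q = 0 := fun i => by
        rcases mul_eq_zero.1 (hz i) with h | h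
        · simp [h]
        · simp [h, Real.zero_rpow hq0.ne']
      have : (1 - q) ≠ 0 := by linarith
      simp [← h, hz2, Real.zero_rpow hq0.ne', Real.zero_rpow this]
    · have e : Y j ^ q - ∑ i, lam i * y i j ^ q =
          Y j ^ (q - 1) * (Y j - ∑ i, lam i * (Y j ^ (1 - q) * y i j ^ q)) := by
        rw [mul_sub, Finset.mul_sum, ← Real.rpow_add_one h.ne']
        congr 1
        · congr 1; ring
        · refine Finset.sum_congr rfl fun i _ => ?_
          have : Y j ^ (q - 1) * Y j ^ (1 - q) = 1 := by
            rw [← Real.rpow_add h]; simp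
          linear_combination (-(lam i * y i j ^ q)) * this
      rw [e]
      apply mul_le_mul_of_nonneg_right
      · exact Real.rpow_le_rpow_of_nonpos h (hYS j) (by linarith)
      · have : ∑ i, lam i * (Y j ^ (1 - q) * y i j ^ q) ≤
            ∑ i, lam i * ((1 - q) * Y j + q * y i j) :=
          Finset.sum_le_sum fun i _ => mul_le_mul_of_nonneg_left
            (Real.geom_mean_le_arith_mean2_weighted (by linarith) hq0.le (hY j) (hy i j)
              (by ring)) (hlam0 i)
        have e2 : ∑ i, lam i * ((1 - q) * Y j + q * y i j) = Y j := by
          have : ∀ i, lam i * ((1 - q) * Y j + q * y i j) =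
            lam i * ((1 - q) * Y j) + q * (lam i * y i j) := fun i => by ring
          simp only [this, Finset.sum_add_distrib, ← Finset.sum_mul, ← Finset.mul_sum, hlam1,
            ← hYd]
          ring
        linarith
  have A' := Finset.sum_le_sum fun j (_ : j ∈ Finset.univ) => A j
  rw [← Finset.mul_sum, Finset.sum_sub_distrib, Finset.sum_sub_distrib, ← hS,
    Finset.sum_comm, Finset.sum_comm (f := fun j i => lam i * y i j ^ q)] at A'
  simp only [← Finset.mul_sum] at A'
  have B : S ^ q - ∑ i, lam i * (∑ j, y i j) ^ q ≤
      S ^ (q - 1) * (S - ∑ i, lam i * ∑ j, Y j ^ (1 - q) * y i j ^ q) := by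
    have hs : ∀ i, 0 ≤ ∑ j, y i j := fun i => Finset.sum_nonneg fun j _ => hy i j
    rcases hS0.eq_or_lt with h | h
    · rw [← h, Real.zero_rpow hq0.ne', Real.zero_rpow (by linarith)]
      have := Finset.sum_nonneg fun i (_ : i ∈ Finset.univ) =>
        mul_nonneg (hlam0 i) (Real.rpow_nonneg (hs i) q)
      linarith
    · have e : S ^ q - ∑ i, lam i * (∑ j, y i j) ^ q =
          S ^ (q - 1) * (S - ∑ i, lam i * (S ^ (1 - q) * (∑ j, y i j) ^ q)) := by
        rw [mul_sub, Finset.mul_sum, ← Real.rpow_add_one h.ne']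
        congr 1
        · congr 1; ring
        · refine Finset.sum_congr rfl fun i _ => ?_
          have : S ^ (q - 1) * S ^ (1 - q) = 1 := by
            rw [← Real.rpow_add h]; simp
          linear_combination (-(lam i * (∑ j, y i j) ^ q)) * this
      rw [e]
      refine mul_le_mul_of_nonneg_left (sub_le_sub_left ?_ _) (Real.rpow_nonneg hS0 _)
      refine Finset.sum_le_sum fun i _ => mul_le_mul_of_nonneg_left ?_ (hlam0 i)
      rw [hS]
      exact holder_aux q hq0 hq1 Y (y i) hY (hy i)
  simp only [mul_sub, Finset.sum_sub_distrib]
  linarith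

theorem jt_formula {n m : ℕ} (q : ℝ) (π : Fin m → ℝ) (hπ0 : ∀ j, 0 ≤ π j)
    (p : Fin m → Fin n → ℝ) (hp0 : ∀ j k, 0 ≤ p j k) :
    jensenTsallis q π p = (1 / (q - 1)) * (1 - ∑ j, π j ^ q) +
      (1 / (1 - q)) * ∑ k, ((∑ j, π j * p j k) ^ q - ∑ j, (π j * p j k) ^ q) := by
  have e : 1 / (1 - q) = - (1 / (q - 1)) := by
    rw [← neg_sub q 1, one_div_neg_eq_neg_one_div]
  have e2 : ∑ k, ∑ j, (π j * p j k) ^ q = ∑ j, π j ^ q * ∑ k, p j k ^ q := by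
    rw [Finset.sum_comm]
    refine Finset.sum_congr rfl fun j _ => ?_
    rw [Finset.mul_sum]
    exact Finset.sum_congr rfl fun k _ => Real.mul_rpow (hπ0 j) (hp0 j k)
  have e3 : ∑ j, π j ^ q * (1 / (q - 1) * (1 - ∑ k, p j k ^ q)) =
      1 / (q - 1) * (∑ j, π j ^ q - ∑ j, π j ^ q * ∑ k, p j k ^ q) := by
    rw [← Finset.sum_sub_distrib, Finset.mul_sum]
    exact Finset.sum_congr rfl fun j _ => by ring
  unfold jensenTsallis tsallisEntropy
  rw [e3, Finset.sum_sub_distrib, e2, e]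
  simp only [Finset.sum_apply, Pi.smul_apply, smul_eq_mul]
  ring

/-- For `q ∈ [0,1)` the Jensen-Tsallis `q`-difference is jointly convex on
`(Δ^{n-1})^m`. -/
theorem jensenTsallis_jointly_convex (n m l : ℕ) (q : ℝ) (hq0 : 0 ≤ q) (hq1 : q < 1)
    (π : Fin m → ℝ) (hπ0 : ∀ j, 0 ≤ π j) (hπ1 : ∑ j, π j = 1)
    (p : Fin l → Fin m → Fin n → ℝ)
    (hp0 : ∀ i j k, 0 ≤ p i j k) (hp1 : ∀ i j, ∑ k, p i j k = 1)
    (lam : Fin l → ℝ) (hlam0 : ∀ i, 0 ≤ lam i) (hlam1 : ∑ i, lam i = 1) :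
    jensenTsallis q π (fun j => ∑ i, lam i • p i j) ≤
      ∑ i, lam i * jensenTsallis q π (p i) := by
  rcases hq0.eq_or_lt with h | hq
  · subst h
    simp [jensenTsallis, tsallisEntropy, ← Finset.sum_mul, hlam1]
  have hP : ∀ j k, 0 ≤ (fun j => ∑ i, lam i • p i j) j k := fun j k => by
    simp only [Finset.sum_apply, Pi.smul_apply, smul_eq_mul]
    exact Finset.sum_nonneg fun i _ => mul_nonneg (hlam0 i) (hp0 i j k)
  rw [jt_formula q π hπ0 _ hP]
  simp only [fun i => jt_formula q π hπ0 (p i) (hp0 i)]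
  simp only [mul_add, Finset.sum_add_distrib, ← Finset.sum_mul, hlam1, one_mul]
  refine add_le_add le_rfl ?_
  have e : ∀ i (x : ℝ), lam i * (1 / (1 - q) * x) = 1 / (1 - q) * (lam i * x) :=
    fun i x => by ring
  simp only [e, ← Finset.mul_sum]
  refine mul_le_mul_of_nonneg_left ?_ (by
    have : 0 < 1 - q := by linarith
    positivity)
  have e5 : ∀ i (f : Fin n → ℝ), lam i * ∑ k, f k = ∑ k, lam i * f k :=
    fun i f => Finset.mul_sum _ _ _
  simp only [e5]
  rw [Finset.sum_comm (s := (Finset.univ : Finset (Fin l)))]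
  refine Finset.sum_le_sum fun k _ => ?_
  have h := key_aux q hq hq1 (fun i j => π j * p i j k)
    (fun i j => mul_nonneg (hπ0 j) (hp0 i j k)) lam hlam0 hlam1
  have e4 : ∀ j, π j * (∑ i, lam i • p i j) k = ∑ i, lam i * (π j * p i j k) := fun j => by
    simp only [Finset.sum_apply, Pi.smul_apply, smul_eq_mul, Finset.mul_sum]
    exact Finset.sum_congr rfl fun i _ => by ring
  simp only [e4]
  exact h
end

section
/- Let q ≥ 0, q ≠ 1, let π = (π_1,…,π_m) be a weight vector in the simplex Δ^{m-1}, and let p_1,…,p_m be probability vectors in Δ^{n-1}. Then the Jensen-Tsallis q-difference satisfies T_q^π(p_1,…,p_m) ≤ S_q(π), where S_q(π) is the Tsallis q-entropy of the weight vector π. -/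
open Finset

theorem sum_rpow_le_of_one_le {ι : Type*} (s : Finset ι) (hs : s.Nonempty) (x : ι → ℝ)
    (hx : ∀ i, 0 ≤ x i) (q : ℝ) (hq : 1 ≤ q) : ∑ i ∈ s, x i ^ q ≤ (∑ i ∈ s, x i) ^ q := by
  induction hs using Finset.Nonempty.cons_induction with
  | singleton a => simp
  | cons a s ha hs ih =>
    rw [Finset.sum_cons, Finset.sum_cons]
    exact (add_le_add le_rfl ih).trans
      (Real.add_rpow_le_rpow_add (hx a) (Finset.sum_nonneg fun i _ => hx i) hq)

theorem rpow_sum_le_of_le_one {ι : Type*} (s : Finset ι) (hs : s.Nonempty) (x : ι → ℝ)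
    (hx : ∀ i, 0 ≤ x i) (q : ℝ) (hq0 : 0 ≤ q) (hq : q ≤ 1) :
    (∑ i ∈ s, x i) ^ q ≤ ∑ i ∈ s, x i ^ q := by
  induction hs using Finset.Nonempty.cons_induction with
  | singleton a => simp
  | cons a s ha hs ih =>
    rw [Finset.sum_cons, Finset.sum_cons]
    exact (Real.rpow_add_le_add_rpow (hx a) (Finset.sum_nonneg fun i _ => hx i) hq0 hq).trans
      (add_le_add le_rfl ih)

/-- Upper bound for the Jensen-Tsallis `q`-difference: `T_q^π(p₁,…,p_m) ≤ S_q(π)`. -/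
theorem jensenTsallis_le_entropy_weights (n m : ℕ) (q : ℝ) (hq0 : 0 ≤ q) (hq1 : q ≠ 1)
    (π : Fin m → ℝ) (hπ0 : ∀ j, 0 ≤ π j) (hπ1 : ∑ j, π j = 1)
    (p : Fin m → Fin n → ℝ) (hp0 : ∀ j k, 0 ≤ p j k) (hp1 : ∀ j, ∑ k, p j k = 1) :
    jensenTsallis q π p ≤ tsallisEntropy q π := by
  have hne : (Finset.univ : Finset (Fin m)).Nonempty := by
    rw [Finset.nonempty_iff_ne_empty]
    intro h
    rw [h] at hπ1
    simp at hπ1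
  have hx : ∀ k j, 0 ≤ π j * p j k := fun k j => mul_nonneg (hπ0 j) (hp0 j k)
  have hmul : ∀ k, ∑ j, (π j * p j k) ^ q = ∑ j, π j ^ q * p j k ^ q := fun k =>
    Finset.sum_congr rfl fun j _ => Real.mul_rpow (hπ0 j) (hp0 j k)
  have key : jensenTsallis q π p - tsallisEntropy q π =
      (1 / (q - 1)) * (∑ k, ∑ j, (π j * p j k) ^ q - ∑ k, (∑ j, π j * p j k) ^ q) := by
    have h1 : ∑ j, π j ^ q * tsallisEntropy q (p j) =
        (1 / (q - 1)) * (∑ j, π j ^ q - ∑ k, ∑ j, π j ^ q * p j k ^ q) := by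
      rw [Finset.sum_comm, ← Finset.sum_sub_distrib, Finset.mul_sum]
      refine Finset.sum_congr rfl fun j _ => ?_
      rw [← Finset.mul_sum, tsallisEntropy]
      ring
    rw [jensenTsallis, h1]
    simp only [hmul, tsallisEntropy, Finset.sum_apply, Pi.smul_apply, smul_eq_mul]
    ring
  rw [← sub_nonpos, key]
  rcases lt_or_gt_of_ne hq1 with h | h
  · refine mul_nonpos_of_nonpos_of_nonneg
      (one_div_nonpos.mpr (by linarith)) (sub_nonneg.mpr ?_)
    exact Finset.sum_le_sum fun k _ => rpow_sum_le_of_le_one _ hne _ (hx k) q hq0 h.le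
  · refine mul_nonpos_of_nonneg_of_nonpos
      (one_div_nonneg.mpr (by linarith)) (sub_nonpos.mpr ?_)
    exact Finset.sum_le_sum fun k _ => sum_rpow_le_of_one_le _ hne _ (hx k) q h.le
end

section
/- Let q > 1, let π = (π_1,…,π_m) be a weight vector in the simplex Δ^{m-1}, and let p_1,…,p_m be probability vectors in Δ^{n-1}. Then the Jensen-Tsallis q-difference is nonnegative: T_q^π(p_1,…,p_m) ≥ 0. -/
open Finset

/-- For `q > 1`, the Jensen-Tsallis `q`-difference is nonnegative. -/
theorem jensenTsallis_nonneg (n m : ℕ) (q : ℝ) (hq : 1 < q)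
    (π : Fin m → ℝ) (hπ0 : ∀ j, 0 ≤ π j) (hπ1 : ∑ j, π j = 1)
    (p : Fin m → Fin n → ℝ) (hp0 : ∀ j k, 0 ≤ p j k) (hp1 : ∀ j, ∑ k, p j k = 1) :
    0 ≤ jensenTsallis q π p := by
  have hc : 0 ≤ 1 / (q - 1) := by
    have : 0 < q - 1 := by linarith
    positivity
  have hpow : ∀ x : ℝ, 0 ≤ x → x ≤ 1 → x ^ q ≤ x := fun x h0 h1 =>
    Real.rpow_le_self_of_le_one h0 h1 hq.le
  have hπle : ∀ j, π j ≤ 1 := fun j => by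
    rw [← hπ1]
    exact Finset.single_le_sum (fun i _ => hπ0 i) (Finset.mem_univ j)
  have hple : ∀ j k, p j k ≤ 1 := fun j k => by
    rw [← hp1 j]
    exact Finset.single_le_sum (fun i _ => hp0 j i) (Finset.mem_univ k)
  have hS : ∀ j, ∑ k, p j k ^ q ≤ 1 := fun j => by
    rw [← hp1 j]
    exact Finset.sum_le_sum fun k _ => hpow _ (hp0 j k) (hple j k)
  have hJ : ∑ k, (∑ j, π j • p j) k ^ q ≤ ∑ j, π j * ∑ k, p j k ^ q := by
    simp_rw [Finset.mul_sum]
    rw [Finset.sum_comm]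
    refine Finset.sum_le_sum fun k _ => ?_
    have := Real.rpow_arith_mean_le_arith_mean_rpow Finset.univ π (fun j => p j k)
      (fun j _ => hπ0 j) hπ1 (fun j _ => hp0 j k) hq.le
    simpa [Finset.sum_apply] using this
  have h1 : ∑ j, π j ^ q * (1 - ∑ k, p j k ^ q) ≤ ∑ j, π j * (1 - ∑ k, p j k ^ q) :=
    Finset.sum_le_sum fun j _ => mul_le_mul_of_nonneg_right (hpow _ (hπ0 j) (hπle j))
      (by linarith [hS j])
  have h2 : ∑ j, π j * (1 - ∑ k, p j k ^ q) = 1 - ∑ j, π j * ∑ k, p j k ^ q := by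
    simp_rw [mul_sub, mul_one]
    rw [Finset.sum_sub_distrib, hπ1]
  have h3 : jensenTsallis q π p = 1 / (q - 1) * ((1 - ∑ k, (∑ j, π j • p j) k ^ q)
      - ∑ j, π j ^ q * (1 - ∑ k, p j k ^ q)) := by
    unfold jensenTsallis tsallisEntropy
    rw [mul_sub (1 / (q - 1)) (1 - _), Finset.mul_sum]
    congr 1
    exact Finset.sum_congr rfl fun j _ => by ring
  rw [h3]
  exact mul_nonneg hc (by linarith)
end

section
/- Let q ∈ [0,1), let π = (π_1,…,π_m) be a weight vector in the simplex Δ^{m-1}, and let p_1,…,p_m be probability vectors in Δ^{n-1}. Then the Jensen-Tsallis q-difference satisfies the lower bound T_q^π(p_1,…,p_m) ≥ S_q(π)·(1 − n^{1−q}). -/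
open Finset

/-- For `q ∈ [0,1)`, the Jensen-Tsallis `q`-difference is bounded below by
`S_q(π) * (1 - n^(1-q))`. -/
theorem jensenTsallis_lower_bound (n m : ℕ) (q : ℝ) (hq0 : 0 ≤ q) (hq1 : q < 1)
    (π : Fin m → ℝ) (hπ0 : ∀ j, 0 ≤ π j) (hπ1 : ∑ j, π j = 1)
    (p : Fin m → Fin n → ℝ) (hp0 : ∀ j k, 0 ≤ p j k) (hp1 : ∀ j, ∑ k, p j k = 1) :
    tsallisEntropy q π * (1 - (n : ℝ) ^ (1 - q)) ≤ jensenTsallis q π p := by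
  have hm : 0 < m := by
    rcases Nat.eq_zero_or_pos m with h | h
    · subst h; simp at hπ1
    · exact h
  have hn : 0 < n := by
    rcases Nat.eq_zero_or_pos n with h | h
    · subst h
      have := hp1 ⟨0, hm⟩
      simp at this
    · exact h
  have hnR : (0 : ℝ) < n := by exact_mod_cast hn
  have hc : 0 < (n : ℝ) ^ q := Real.rpow_pos_of_pos hnR q
  have hN : (n : ℝ) ^ (1 - q) * (n : ℝ) ^ q = n := by
    rw [← Real.rpow_add hnR]; simp
  have hJ : ∀ k, ∑ j, π j * ((n : ℝ) * p j k) ^ q ≤ (∑ j, π j * ((n : ℝ) * p j k)) ^ q := by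
    intro k
    have h := (Real.concaveOn_rpow hq0 hq1.le).le_map_sum (t := Finset.univ) (w := π)
      (p := fun j => (n : ℝ) * p j k) (fun j _ => hπ0 j) hπ1
      (fun j _ => mul_nonneg hnR.le (hp0 j k))
    simpa [smul_eq_mul] using h
  have hB : ∀ u : ℝ, 0 ≤ u → u ^ q ≤ (1 - q) + q * u := by
    intro u hu
    have h := rpow_one_add_le_one_add_mul_self (s := u - 1) (by linarith) hq0 hq1.le
    have e : 1 + (u - 1) = u := by ring
    rw [e] at h
    linarith
  have hw : ∀ j, π j ≤ π j ^ q := by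
    intro j
    have h1 : π j ≤ 1 := by
      rw [← hπ1]; exact Finset.single_le_sum (fun i _ => hπ0 i) (Finset.mem_univ j)
    exact Real.self_le_rpow_of_le_one (hπ0 j) h1 hq1.le
  have hmul : ∀ j k, ((n : ℝ) * p j k) ^ q = (n : ℝ) ^ q * p j k ^ q := fun j k =>
    Real.mul_rpow hnR.le (hp0 j k)
  -- the key inequality for each coordinate
  have key : ∀ k, (1 - q) + q * (n * ∑ j, π j * p j k) - (n : ℝ) ^ q * (∑ j, π j * p j k) ^ q
      ≤ ∑ j, π j ^ q * ((1 - q) + q * (n * p j k) - (n : ℝ) ^ q * p j k ^ q) := by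
    intro k
    have e : ∑ j, π j * ((n : ℝ) * p j k) = n * ∑ j, π j * p j k := by
      rw [Finset.mul_sum]; exact Finset.sum_congr rfl fun j _ => by ring
    have h1 := hJ k
    rw [e, Real.mul_rpow hnR.le (Finset.sum_nonneg fun j _ => mul_nonneg (hπ0 j) (hp0 j k))] at h1
    have h2 : ∑ j, π j * ((1 - q) + q * (n * p j k) - ((n : ℝ) * p j k) ^ q)
        = (1 - q) + q * (n * ∑ j, π j * p j k) - ∑ j, π j * ((n : ℝ) * p j k) ^ q := by
      rw [← e]
      simp only [mul_sub, mul_add, Finset.sum_sub_distrib, Finset.sum_add_distrib]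
      rw [← Finset.sum_mul, ← Finset.sum_mul, hπ1, Finset.mul_sum]
      have : ∑ j, π j * (q * ((n : ℝ) * p j k)) = ∑ j, q * (π j * (n * p j k)) :=
        Finset.sum_congr rfl fun j _ => by ring
      rw [this]; ring
    have h3 : ∑ j, π j * ((1 - q) + q * (n * p j k) - ((n : ℝ) * p j k) ^ q)
        ≤ ∑ j, π j ^ q * ((1 - q) + q * (n * p j k) - (n : ℝ) ^ q * p j k ^ q) := by
      refine Finset.sum_le_sum fun j _ => ?_
      rw [← hmul]
      exact mul_le_mul_of_nonneg_right (hw j)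
        (sub_nonneg.2 (hB _ (mul_nonneg hnR.le (hp0 j k))))
    linarith
  have tot := Finset.sum_le_sum fun k (_ : k ∈ (Finset.univ : Finset (Fin n))) => key k
  rw [Finset.sum_comm] at tot
  have hs : ∑ k, ∑ j, π j * p j k = 1 := by
    rw [Finset.sum_comm]
    simp only [← Finset.mul_sum, hp1, mul_one, hπ1]
  have eL : ∑ k, ((1 - q) + q * (n * ∑ j, π j * p j k) - (n : ℝ) ^ q * (∑ j, π j * p j k) ^ q)
      = n - (n : ℝ) ^ q * ∑ k, (∑ j, π j * p j k) ^ q := by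
    rw [Finset.sum_sub_distrib, Finset.sum_add_distrib, ← Finset.mul_sum, ← Finset.mul_sum,
      ← Finset.mul_sum, hs]
    simp; ring
  have eR : ∀ j, ∑ k, π j ^ q * ((1 - q) + q * (n * p j k) - (n : ℝ) ^ q * p j k ^ q)
      = π j ^ q * n - (n : ℝ) ^ q * (π j ^ q * ∑ k, p j k ^ q) := by
    intro j
    rw [← Finset.mul_sum, Finset.sum_sub_distrib, Finset.sum_add_distrib, ← Finset.mul_sum,
      ← Finset.mul_sum, ← Finset.mul_sum, hp1]
    simp; ring
  rw [eL, Finset.sum_congr rfl fun j _ => eR j, Finset.sum_sub_distrib, ← Finset.sum_mul,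
    ← Finset.mul_sum] at tot
  have eT : jensenTsallis q π p = (1 / (1 - q)) * (∑ k, (∑ j, π j * p j k) ^ q - 1
      - (∑ j, π j ^ q * ∑ k, p j k ^ q) + ∑ j, π j ^ q) := by
    have hx : (1 : ℝ) / (q - 1) = - (1 / (1 - q)) := by
      rw [← neg_sub 1 q, div_neg]
    have h1 : ∑ j, π j ^ q * tsallisEntropy q (p j) =
        (1 / (1 - q)) * (∑ j, π j ^ q * ∑ k, p j k ^ q - ∑ j, π j ^ q) := by
      rw [← Finset.sum_sub_distrib, Finset.mul_sum]
      refine Finset.sum_congr rfl fun j _ => ?_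
      rw [tsallisEntropy, hx]; ring
    rw [jensenTsallis, h1, tsallisEntropy, hx]
    simp only [Finset.sum_apply, Pi.smul_apply, smul_eq_mul]
    ring
  have eS : tsallisEntropy q π = (1 / (1 - q)) * (∑ j, π j ^ q - 1) := by
    rw [tsallisEntropy, ← neg_sub 1 q, div_neg]; ring
  rw [eT, eS, mul_assoc]
  refine mul_le_mul_of_nonneg_left ?_ (one_div_nonneg.2 (by linarith))
  refine le_of_mul_le_mul_left ?_ hc
  generalize ∑ k, (∑ j, π j * p j k) ^ q = A at *
  generalize ∑ j, π j ^ q * ∑ k, p j k ^ q = B at *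
  generalize ∑ j, π j ^ q = P at *
  have : (n : ℝ) ^ q * ((P - 1) * (1 - (n : ℝ) ^ (1 - q)))
      = (P - 1) * ((n : ℝ) ^ q - n) := by
    linear_combination (-(P - 1)) * hN
  rw [this]
  linarith
end

section
/- Let q ∈ [0,2], q ≠ 1, let π = (π_1,…,π_m) be a weight vector in the simplex Δ^{m-1}, and fix probability vectors p_2,…,p_m ∈ Δ^{n-1}. Then the map p_1 ↦ T_q^π(p_1, p_2, …, p_m) is convex on Δ^{n-1}; i.e., the Jensen-Tsallis q-difference is convex in each argument separately for q ∈ [0,2]. -/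
open Finset

/-- The scalar function `y ↦ (y^q - (y+c)^q)/(q-1)` is convex on `[0,∞)`. -/
lemma scalar_convex_s13 (q c : ℝ) (hq0 : 0 ≤ q) (hq2 : q ≤ 2) (hq1 : q ≠ 1) (hc : 0 ≤ c) :
    ConvexOn ℝ (Set.Ici (0 : ℝ)) (fun y : ℝ => (1 / (q - 1)) * (y ^ q - (y + c) ^ q)) := by
  have hq1' : q - 1 ≠ 0 := sub_ne_zero.mpr hq1
  refine convexOn_of_hasDerivWithinAt2_nonneg (convex_Ici 0)
    (f' := fun y => (1 / (q - 1)) * (q * y ^ (q - 1) - q * (y + c) ^ (q - 1)))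
    (f'' := fun y => q * (y ^ (q - 2) - (y + c) ^ (q - 2))) ?_ ?_ ?_ ?_
  · refine Continuous.continuousOn ?_
    have h1 : Continuous (fun y : ℝ => y ^ q) := Real.continuous_rpow_const hq0
    exact continuous_const.mul (h1.sub (h1.comp (continuous_id.add continuous_const)))
  · intro x hx
    rw [interior_Ici] at hx
    have hx0 : 0 < x := hx
    have hxc : 0 < x + c := by linarith
    refine HasDerivAt.hasDerivWithinAt ?_
    have h1 : HasDerivAt (fun y : ℝ => y ^ q) (q * x ^ (q - 1)) x :=
      Real.hasDerivAt_rpow_const (Or.inl hx0.ne')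
    have h2 : HasDerivAt (fun y : ℝ => (y + c) ^ q) (q * (x + c) ^ (q - 1)) x :=
      HasDerivAt.comp_add_const x c (Real.hasDerivAt_rpow_const (Or.inl hxc.ne'))
    exact (h1.sub h2).const_mul _
  · intro x hx
    rw [interior_Ici] at hx
    have hx0 : 0 < x := hx
    have hxc : 0 < x + c := by linarith
    refine HasDerivAt.hasDerivWithinAt ?_
    have h1 : HasDerivAt (fun y : ℝ => y ^ (q - 1)) ((q - 1) * x ^ (q - 1 - 1)) x :=
      Real.hasDerivAt_rpow_const (Or.inl hx0.ne')
    have h2 : HasDerivAt (fun y : ℝ => (y + c) ^ (q - 1)) ((q - 1) * (x + c) ^ (q - 1 - 1)) x :=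
      HasDerivAt.comp_add_const x c (Real.hasDerivAt_rpow_const (Or.inl hxc.ne'))
    have h3 := ((h1.const_mul q).sub (h2.const_mul q)).const_mul (1 / (q - 1))
    have e : q - 1 - 1 = q - 2 := by ring
    rw [e] at h3
    refine h3.congr_deriv ?_
    field_simp
  · intro x hx
    rw [interior_Ici] at hx
    have hx0 : 0 < x := hx
    have := Real.rpow_le_rpow_of_nonpos hx0 (show x ≤ x + c by linarith)
      (show q - 2 ≤ 0 by linarith)
    exact mul_nonneg hq0 (by linarith)

/-- Decomposition of the Jensen-Tsallis difference as a constant plus a sum over coordinates. -/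
lemma jensenTsallis_cons (n m : ℕ) (q : ℝ)
    (π : Fin (m + 1) → ℝ) (hπ0 : ∀ j, 0 ≤ π j) (ps : Fin m → Fin n → ℝ)
    (p : Fin n → ℝ) (hp : ∀ k, 0 ≤ p k) :
    jensenTsallis q π (Fin.cons p ps) =
      ∑ k, (1 / (q - 1)) * ((π 0 * p k) ^ q - (π 0 * p k + ∑ j : Fin m, π j.succ * ps j k) ^ q)
      + ((1 / (q - 1)) * (1 - π 0 ^ q) - ∑ j : Fin m, π j.succ ^ q * tsallisEntropy q (ps j)) := by
  have h : ∀ k, (π 0 * p k) ^ q = π 0 ^ q * p k ^ q := fun k =>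
    Real.mul_rpow (hπ0 0) (hp k)
  simp only [jensenTsallis, Fin.sum_univ_succ, Fin.cons_zero, Fin.cons_succ, h]
  rw [← Finset.mul_sum, Finset.sum_sub_distrib, ← Finset.mul_sum]
  simp only [tsallisEntropy, Pi.add_apply, Pi.smul_apply, Finset.sum_apply, smul_eq_mul]
  ring

/-- For `q ∈ [0,2]`, the Jensen-Tsallis `q`-difference is convex in each argument
separately: with the remaining arguments `p₂,…,p_m` fixed in the simplex, the map
`p₁ ↦ T_q^π(p₁,p₂,…,p_m)` is convex on the simplex. -/
theorem jensenTsallis_convexOn_first_arg (n m : ℕ) (q : ℝ)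
    (hq0 : 0 ≤ q) (hq2 : q ≤ 2) (hq1 : q ≠ 1)
    (π : Fin (m + 1) → ℝ) (hπ0 : ∀ j, 0 ≤ π j) (hπ1 : ∑ j, π j = 1)
    (ps : Fin m → Fin n → ℝ) (hps0 : ∀ j k, 0 ≤ ps j k) (hps1 : ∀ j, ∑ k, ps j k = 1) :
    ConvexOn ℝ {p : Fin n → ℝ | (∀ k, 0 ≤ p k) ∧ ∑ k, p k = 1}
      (fun p₁ => jensenTsallis q π (Fin.cons p₁ ps)) := by
  refine ⟨?_, ?_⟩
  · rintro x ⟨hx0, hx1⟩ y ⟨hy0, hy1⟩ a b ha hb hab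
    refine ⟨fun k => ?_, ?_⟩
    · simp only [Pi.add_apply, Pi.smul_apply, smul_eq_mul]
      exact add_nonneg (mul_nonneg ha (hx0 k)) (mul_nonneg hb (hy0 k))
    · simp only [Pi.add_apply, Pi.smul_apply, smul_eq_mul]
      rw [Finset.sum_add_distrib, ← Finset.mul_sum, ← Finset.mul_sum, hx1, hy1]
      linarith
  · rintro x ⟨hx0, hx1⟩ y ⟨hy0, hy1⟩ a b ha hb hab
    have hz0 : ∀ k, 0 ≤ (a • x + b • y) k := fun k => by
      simp only [Pi.add_apply, Pi.smul_apply, smul_eq_mul]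
      exact add_nonneg (mul_nonneg ha (hx0 k)) (mul_nonneg hb (hy0 k))
    simp only []
    rw [jensenTsallis_cons n m q π hπ0 ps _ hz0, jensenTsallis_cons n m q π hπ0 ps _ hx0,
      jensenTsallis_cons n m q π hπ0 ps _ hy0]
    set C := (1 / (q - 1)) * (1 - π 0 ^ q) - ∑ j : Fin m, π j.succ ^ q * tsallisEntropy q (ps j)
    have hC : a * C + b * C = C := by rw [← add_mul, hab, one_mul]
    simp only [smul_eq_mul, mul_add]
    have key : ∀ k ∈ (Finset.univ : Finset (Fin n)), _ ≤ _ := fun k _ =>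
      (scalar_convex_s13 q (∑ j : Fin m, π j.succ * ps j k) hq0 hq2 hq1
        (Finset.sum_nonneg fun j _ => mul_nonneg (hπ0 _) (hps0 j k))).2
        (show π 0 * x k ∈ Set.Ici (0 : ℝ) from mul_nonneg (hπ0 0) (hx0 k))
        (show π 0 * y k ∈ Set.Ici (0 : ℝ) from mul_nonneg (hπ0 0) (hy0 k)) ha hb hab
    have key2 := Finset.sum_le_sum key
    simp only [smul_eq_mul] at key2
    rw [Finset.sum_add_distrib, ← Finset.mul_sum _ _ a, ← Finset.mul_sum _ _ b] at key2
    have e : ∀ k, π 0 * (a • x + b • y) k = a * (π 0 * x k) + b * (π 0 * y k) := fun k => by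
      simp only [Pi.add_apply, Pi.smul_apply, smul_eq_mul]
      ring
    simp only [e]
    linarith
end

section
/- Let q ≥ 2, let π = (π_1,…,π_m) be a weight vector in the simplex Δ^{m-1}, and fix probability vectors p_2,…,p_m ∈ Δ^{n-1}. Then the map p_1 ↦ T_q^π(p_1, p_2, …, p_m) is concave on Δ^{n-1}; i.e., the Jensen-Tsallis q-difference is concave in each argument separately for q ≥ 2. -/
open Finset

theorem aux_convexOn (q : ℝ) (hq : 2 ≤ q) (b : ℝ) (hb : 0 ≤ b) :
    ConvexOn ℝ (Set.Ici (0 : ℝ)) (fun x => (x + b) ^ q - x ^ q) := by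
  have hd : ∀ r x : ℝ, 0 < x → HasDerivAt (fun x : ℝ => (x + b) ^ r - x ^ r)
      (r * ((x + b) ^ (r - 1) - x ^ (r - 1))) x := by
    intro r x hx
    have h1 := ((hasDerivAt_id x).add_const b).rpow_const (p := r)
      (Or.inl (by simp only [id]; positivity))
    have h2 := (hasDerivAt_id x).rpow_const (p := r) (Or.inl (by simpa using hx.ne'))
    refine (h1.sub h2).congr_deriv ?_
    simp only [id]
    ring
  refine convexOn_of_hasDerivWithinAt2_nonneg (convex_Ici 0)
    (f' := fun x => q * ((x + b) ^ (q - 1) - x ^ (q - 1)))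
    (f'' := fun x => q * ((q - 1) * ((x + b) ^ (q - 1 - 1) - x ^ (q - 1 - 1)))) ?_ ?_ ?_ ?_
  · apply ContinuousOn.sub
    · exact ContinuousOn.rpow_const (by fun_prop) (fun x _ => Or.inr (by linarith))
    · exact ContinuousOn.rpow_const (by fun_prop) (fun x _ => Or.inr (by linarith))
  · intro x hx
    rw [interior_Ici] at hx
    exact (hd q x hx).hasDerivWithinAt
  · intro x hx
    rw [interior_Ici] at hx
    exact ((hd (q - 1) x hx).const_mul q).hasDerivWithinAt
  · intro x hx
    rw [interior_Ici] at hx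
    have hx' : 0 < x := hx
    have h := Real.rpow_le_rpow hx'.le (by linarith : x ≤ x + b) (by linarith : 0 ≤ q - 1 - 1)
    exact mul_nonneg (by linarith) (mul_nonneg (by linarith) (by linarith))

/-- For `q ≥ 2`, the Jensen-Tsallis `q`-difference is concave in each argument
separately: with the remaining arguments `p₂,…,p_m` fixed in the simplex, the map
`p₁ ↦ T_q^π(p₁,p₂,…,p_m)` is concave on the simplex. -/
theorem jensenTsallis_concaveOn_first_arg (n m : ℕ) (q : ℝ) (hq : 2 ≤ q)
    (π : Fin (m + 1) → ℝ) (hπ0 : ∀ j, 0 ≤ π j) (hπ1 : ∑ j, π j = 1)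
    (ps : Fin m → Fin n → ℝ) (hps0 : ∀ j k, 0 ≤ ps j k) (hps1 : ∀ j, ∑ k, ps j k = 1) :
    ConcaveOn ℝ {p : Fin n → ℝ | (∀ k, 0 ≤ p k) ∧ ∑ k, p k = 1}
      (fun p₁ => jensenTsallis q π (Fin.cons p₁ ps)) := by
  set b : Fin n → ℝ := fun k => ∑ j, π j.succ * ps j k with hb
  have hb0 : ∀ k, 0 ≤ b k := fun k =>
    Finset.sum_nonneg fun j _ => mul_nonneg (hπ0 _) (hps0 _ _)
  obtain ⟨C, hC⟩ : ∃ C : ℝ, ∀ p : Fin n → ℝ, (∀ k, 0 ≤ p k) →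
      jensenTsallis q π (Fin.cons p ps) =
        C - 1 / (q - 1) * ∑ k, ((π 0 * p k + b k) ^ q - (π 0 * p k) ^ q) := by
    refine ⟨1 / (q - 1) - π 0 ^ q * (1 / (q - 1))
      - ∑ j : Fin m, π j.succ ^ q * tsallisEntropy q (ps j), fun p hp => ?_⟩
    have h1 : ∀ k, (π 0 * p k) ^ q = π 0 ^ q * p k ^ q := fun k =>
      Real.mul_rpow (hπ0 0) (hp k)
    simp only [jensenTsallis, Fin.sum_univ_succ, Fin.cons_zero, Fin.cons_succ]
    rw [Finset.sum_sub_distrib]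
    simp only [h1, ← Finset.mul_sum]
    have h2 : tsallisEntropy q (π 0 • p + ∑ j : Fin m, π j.succ • ps j)
        = 1 / (q - 1) * (1 - ∑ k, (π 0 * p k + b k) ^ q) := by
      simp [tsallisEntropy, hb, Finset.sum_apply]
    rw [h2, tsallisEntropy.eq_1 q p]
    ring
  refine ⟨?_, ?_⟩
  · exact convex_stdSimplex ℝ (Fin n)
  · rintro x ⟨hx, -⟩ y ⟨hy, -⟩ s t hs ht hst
    have hxy : ∀ k, 0 ≤ (s • x + t • y) k := fun k => by
      simpa using add_nonneg (mul_nonneg hs (hx k)) (mul_nonneg ht (hy k))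
    simp only [hC x hx, hC y hy, hC _ hxy, smul_eq_mul]
    have key : ∑ k, ((π 0 * (s • x + t • y) k + b k) ^ q - (π 0 * (s • x + t • y) k) ^ q)
        ≤ s * ∑ k, ((π 0 * x k + b k) ^ q - (π 0 * x k) ^ q)
          + t * ∑ k, ((π 0 * y k + b k) ^ q - (π 0 * y k) ^ q) := by
      rw [Finset.mul_sum, Finset.mul_sum, ← Finset.sum_add_distrib]
      refine Finset.sum_le_sum fun k _ => ?_
      have h := (aux_convexOn q hq (b k) (hb0 k)).2
        (show π 0 * x k ∈ Set.Ici (0 : ℝ) from mul_nonneg (hπ0 0) (hx k))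
        (show π 0 * y k ∈ Set.Ici (0 : ℝ) from mul_nonneg (hπ0 0) (hy k)) hs ht hst
      have e : π 0 * (s • x + t • y) k = s * (π 0 * x k) + t * (π 0 * y k) := by
        simp only [Pi.add_apply, Pi.smul_apply, smul_eq_mul]; ring
      rw [e]
      simpa only [smul_eq_mul] using h
    have hq1 : 0 ≤ 1 / (q - 1) := by
      apply div_nonneg <;> linarith
    have h3 := mul_le_mul_of_nonneg_left key hq1
    have h4 : C = s * C + t * C := by rw [← add_mul, hst, one_mul]
    linarith
end
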